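/- arXiv:2205.14258 — 2 statements merged into one kernel-verified Lean document; each statement's English description precedes it below -/
import Mathlib

section
/- Let σ : ℝ → ℝ be a function and n a positive natural number such that σ(I_n) is invertible, and define φ_σ(A) := σ(A)·σ(I_n)^{-1}. Then φ_σ restricted to G_{σ_n} is a group homomorphism into GL_n(ℝ): for all A₁, A₂ ∈ G_{σ_n}, φ_σ(A₁·A₂⁻¹) = φ_σ(A₁)·φ_σ(A₂)⁻¹. -/
open Matrix

noncomputable section

/-- Coordinatewise application of `σ : ℝ → ℝ` to vectors in `ℝ^n`. -/
def actCoord (σ : ℝ → ℝ) (n : ℕ) (x : Fin n → ℝ) : Fin n → ℝ := fun i => σ (x i)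

/-- The intertwiner group `G_{σ_n}` of the nonlinearity `σ_n`. -/
def Intertwiner (σ : ℝ → ℝ) (n : ℕ) : Set (Matrix (Fin n) (Fin n) ℝ) :=
  {A | IsUnit A ∧ ∃ B : Matrix (Fin n) (Fin n) ℝ, IsUnit B ∧
    ∀ x : Fin n → ℝ, actCoord σ n (A.mulVec x) = B.mulVec (actCoord σ n x)}

/-- `φ_σ(A) = σ(A) · σ(I_n)⁻¹`, where `σ` is applied entrywise. -/
def phiMap (σ : ℝ → ℝ) (n : ℕ) (A : Matrix (Fin n) (Fin n) ℝ) :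
    Matrix (Fin n) (Fin n) ℝ :=
  A.map σ * ((1 : Matrix (Fin n) (Fin n) ℝ).map σ)⁻¹

/-!
Reading `σ(A x) = B σ(x)` on the columns `x` of a matrix `M` gives `σ(A M) = B σ(M)`. For `M = I`
this says that `B = σ(A) σ(I)⁻¹ = φ_σ(A)`, and for `M = A⁻¹` it makes `B` invertible. Since
intertwining pairs `(A, B)` can be multiplied and inverted, `φ_σ` respects both operations.
-/

section Intertwines

variable {l m n R S : Type*} [Fintype m] [Fintype n]

/-- The intertwining relation `σ ∘ A = B ∘ σ`, where `σ` acts coordinatewise on vectors. The source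
and target of `σ` may differ, and `A`, `B` may be rectangular of the same shape. -/
def Intertwines [NonUnitalNonAssocSemiring R] [NonUnitalNonAssocSemiring S]
    (σ : R → S) (A : Matrix l m R) (B : Matrix l m S) : Prop :=
  ∀ x : m → R, σ ∘ (A *ᵥ x) = B *ᵥ (σ ∘ x)

namespace Intertwines

theorem map_mul [NonUnitalNonAssocSemiring R] [NonUnitalNonAssocSemiring S] {σ : R → S}
    {A : Matrix l m R} {B : Matrix l m S} (h : Intertwines σ A B) {k : Type*}
    (M : Matrix m k R) : (A * M).map σ = B * M.map σ := by
  ext i j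
  exact congrFun (h (M.col j)) i

theorem mul [NonUnitalSemiring R] [NonUnitalSemiring S] {σ : R → S}
    {A₁ : Matrix l m R} {B₁ : Matrix l m S} {A₂ : Matrix m n R} {B₂ : Matrix m n S}
    (h₁ : Intertwines σ A₁ B₁) (h₂ : Intertwines σ A₂ B₂) :
    Intertwines σ (A₁ * A₂) (B₁ * B₂) := fun x => by
  rw [← mulVec_mulVec, h₁, h₂, mulVec_mulVec]

variable [DecidableEq m] [CommRing S]

theorem inv [CommRing R] {σ : R → S} {A : Matrix m m R} {B : Matrix m m S}
    (h : Intertwines σ A B) (hA : IsUnit A) (hB : IsUnit B) :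
    Intertwines σ A⁻¹ B⁻¹ := fun x => by
  rw [isUnit_iff_isUnit_det] at hA hB
  calc σ ∘ (A⁻¹ *ᵥ x)
      = B⁻¹ *ᵥ (B *ᵥ (σ ∘ (A⁻¹ *ᵥ x))) := by
        rw [mulVec_mulVec, nonsing_inv_mul _ hB, one_mulVec]
    _ = B⁻¹ *ᵥ (σ ∘ (A *ᵥ (A⁻¹ *ᵥ x))) := by rw [h]
    _ = B⁻¹ *ᵥ (σ ∘ x) := by rw [mulVec_mulVec, mul_nonsing_inv _ hA, one_mulVec]

theorem isUnit_right [Semiring R] {σ : R → S} {A : Matrix m m R} {B : Matrix m m S}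
    (h : Intertwines σ A B) (hσ : IsUnit ((1 : Matrix m m R).map σ)) (hA : IsUnit A) :
    IsUnit B := by
  obtain ⟨A', hA'⟩ := hA.exists_right_inv
  rw [← hA', h.map_mul] at hσ
  exact isUnit_of_mul_isUnit_left hσ

end Intertwines

end Intertwines

section NormalizedMap

variable {n R S : Type*} [Fintype n] [DecidableEq n] [CommRing S]

/-- The matrix `φ_σ(A) = σ(A) σ(I)⁻¹` for a map `σ` into a commutative ring and an arbitrary finite
index type. It is meaningful only when `σ(I)` is invertible: otherwise the junk value
`σ(I)⁻¹ = 0` makes it zero. -/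
def normalizedMap [Zero R] [One R] (σ : R → S) (A : Matrix n n R) : Matrix n n S :=
  A.map σ * ((1 : Matrix n n R).map σ)⁻¹

theorem Intertwines.normalizedMap_eq [NonAssocSemiring R] {σ : R → S} {A : Matrix n n R}
    {B : Matrix n n S} (h : Intertwines σ A B) (hσ : IsUnit ((1 : Matrix n n R).map σ)) :
    normalizedMap σ A = B := by
  have map_eq : A.map σ = B * (1 : Matrix n n R).map σ := by
    simpa using h.map_mul (1 : Matrix n n R)
  rw [normalizedMap, map_eq,
    mul_nonsing_inv_cancel_right _ _ ((isUnit_iff_isUnit_det _).mp hσ)]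

theorem phi_is_hom_general [CommRing R] {σ : R → S}
    (hσ : IsUnit ((1 : Matrix n n R).map σ)) {A₁ A₂ : Matrix n n R} {B₁ B₂ : Matrix n n S}
    (h₁ : Intertwines σ A₁ B₁) (h₂ : Intertwines σ A₂ B₂) (hA₂ : IsUnit A₂) :
    normalizedMap σ (A₁ * A₂⁻¹) = normalizedMap σ A₁ * (normalizedMap σ A₂)⁻¹ := by
  have hB₂ : IsUnit B₂ := h₂.isUnit_right hσ hA₂
  have h : Intertwines σ (A₁ * A₂⁻¹) (B₁ * B₂⁻¹) := h₁.mul (h₂.inv hA₂ hB₂)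
  rw [h.normalizedMap_eq hσ, h₁.normalizedMap_eq hσ, h₂.normalizedMap_eq hσ]

end NormalizedMap

/-- If `σ(I_n)` is invertible, then `φ_σ` restricted to `G_{σ_n}` is a group homomorphism
into `GL_n(ℝ)`: `φ_σ(A₁·A₂⁻¹) = φ_σ(A₁)·φ_σ(A₂)⁻¹` for all `A₁, A₂ ∈ G_{σ_n}`. -/
theorem phi_is_hom (σ : ℝ → ℝ) (n : ℕ) (hn : 0 < n)
    (hσI : IsUnit ((1 : Matrix (Fin n) (Fin n) ℝ).map σ)) :
    ∀ A₁ ∈ Intertwiner σ n, ∀ A₂ ∈ Intertwiner σ n,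
      phiMap σ n (A₁ * A₂⁻¹) = phiMap σ n A₁ * (phiMap σ n A₂)⁻¹ := by
  rintro A₁ ⟨-, B₁, -, h₁⟩ A₂ ⟨hA₂, B₂, -, h₂⟩
  exact phi_is_hom_general (B₁ := B₁) (B₂ := B₂) hσI h₁ h₂ hA₂
end
end

section
/- In the setting of a feedforward network f with weights (W_i, b_i) and transformed weights (W'_i, b'_i) obtained from elements A_i ∈ G_{σ_{n_i}} as above, fix a layer 1 ≤ l ≤ k−1 and let f̃_{>l} denote the composition of layers l+1,…,k using the transformed weights. Then the stitched network f̃_{>l} ∘ φ_σ(A_l) ∘ f_{≤l} equals f as a function ℝ^{n_0} → ℝ^{n_k}; likewise f_{>l} ∘ φ_σ(A_l)^{−1} ∘ f̃_{≤l} equals f, where f̃_{≤l} is the composition of layers 1,…,l using the transformed weights. -/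
/-!
Evaluating `σ_n ∘ A = B ∘ σ_n` at the standard basis gives `σ(A) = B σ(I_n)`, so `B` can only be
`φ_σ(A)`. Hence each transformed hidden layer is the original one read in new coordinates,
`ℓ'_{i+1} ∘ φ_σ(A_i) = φ_σ(A_{i+1}) ∘ ℓ_{i+1}`, and these squares paste to
`ℓ'_{i+j} ∘ ⋯ ∘ ℓ'_{i+1} ∘ φ_σ(A_i) = φ_σ(A_{i+j}) ∘ ℓ_{i+j} ∘ ⋯ ∘ ℓ_{i+1}`.
Neither end of the network changes coordinates: `W'_1` carries no inverse factor, and `A_k = 1`.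
-/

open Matrix

noncomputable section

/-- `fwdHidden σ n W b m = f_{≤ m}`: the composition of the first `m` activated layers. -/
def fwdHidden (σ : ℝ → ℝ) (n : ℕ → ℕ)
    (W : ∀ i : ℕ, Matrix (Fin (n (i + 1))) (Fin (n i)) ℝ)
    (b : ∀ i : ℕ, Fin (n (i + 1)) → ℝ) :
    ∀ m : ℕ, (Fin (n 0) → ℝ) → (Fin (n m) → ℝ)
  | 0 => id
  | (m + 1) => fun x => fun i => σ (((W m).mulVec (fwdHidden σ n W b m x) + b m) i)

/-- `seg σ n W b m j`: the composition of the `j` activated layers `ℓ_{m+j} ∘ ⋯ ∘ ℓ_{m+1}`,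
taking inputs at layer `m`. -/
def seg (σ : ℝ → ℝ) (n : ℕ → ℕ)
    (W : ∀ i : ℕ, Matrix (Fin (n (i + 1))) (Fin (n i)) ℝ)
    (b : ∀ i : ℕ, Fin (n (i + 1)) → ℝ) (m : ℕ) :
    ∀ j : ℕ, (Fin (n m) → ℝ) → (Fin (n (m + j)) → ℝ)
  | 0 => id
  | (j + 1) => fun x => fun i =>
      σ (((W (m + j)).mulVec (seg σ n W b m j x) + b (m + j)) i)

theorem map_eq_mul_map_one_of_actCoord_mulVec {σ : ℝ → ℝ} {p q : ℕ}
    {A B : Matrix (Fin p) (Fin q) ℝ}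
    (h : ∀ x, actCoord σ p (A *ᵥ x) = B *ᵥ actCoord σ q x) :
    A.map σ = B * (1 : Matrix (Fin q) (Fin q) ℝ).map σ := by
  refine Matrix.ext_col fun j => ?_
  calc (A.map σ).col j = actCoord σ p (A.col j) := rfl
    _ = actCoord σ p (A *ᵥ (1 : Matrix (Fin q) (Fin q) ℝ).col j) := by
      rw [← mulVec_single_one, ← mulVec_single_one, one_mulVec]
    _ = B *ᵥ actCoord σ q ((1 : Matrix (Fin q) (Fin q) ℝ).col j) := h _
    _ = (B * (1 : Matrix (Fin q) (Fin q) ℝ).map σ).col j := rfl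

section PhiMap

variable {σ : ℝ → ℝ} {n : ℕ} {A : Matrix (Fin n) (Fin n) ℝ}

theorem phiMap_eq_of_actCoord_mulVec {B : Matrix (Fin n) (Fin n) ℝ}
    (hσ : IsUnit ((1 : Matrix (Fin n) (Fin n) ℝ).map σ))
    (h : ∀ x, actCoord σ n (A *ᵥ x) = B *ᵥ actCoord σ n x) :
    phiMap σ n A = B := by
  rw [phiMap, map_eq_mul_map_one_of_actCoord_mulVec h,
    mul_nonsing_inv_cancel_right _ _ ((isUnit_iff_isUnit_det _).1 hσ)]

theorem isUnit_phiMap (hσ : IsUnit ((1 : Matrix (Fin n) (Fin n) ℝ).map σ))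
    (hA : A ∈ Intertwiner σ n) : IsUnit (phiMap σ n A) := by
  obtain ⟨-, B, hB, h⟩ := hA
  rwa [phiMap_eq_of_actCoord_mulVec hσ h]

theorem actCoord_mulVec_eq_phiMap_mulVec
    (hσ : IsUnit ((1 : Matrix (Fin n) (Fin n) ℝ).map σ))
    (hA : A ∈ Intertwiner σ n) (x : Fin n → ℝ) :
    actCoord σ n (A *ᵥ x) = phiMap σ n A *ᵥ actCoord σ n x := by
  obtain ⟨-, B, -, h⟩ := hA
  rw [phiMap_eq_of_actCoord_mulVec hσ h, h]

end PhiMap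

section Affine

variable {ι κ τ R : Type*} [Fintype κ] [DecidableEq κ] [CommRing R]

theorem inv_mulVec_mulVec_of_isUnit {C : Matrix κ κ R} (hC : IsUnit C) (y : κ → R) :
    C⁻¹ *ᵥ (C *ᵥ y) = y := by
  rw [mulVec_mulVec, nonsing_inv_mul _ ((isUnit_iff_isUnit_det _).1 hC), one_mulVec]

theorem mul_mul_inv_mulVec_mulVec_add [Fintype ι] {C : Matrix κ κ R} (hC : IsUnit C)
    (A : Matrix τ ι R) (W : Matrix ι κ R) (b : ι → R) (y : κ → R) :
    (A * W * C⁻¹) *ᵥ (C *ᵥ y) + A *ᵥ b = A *ᵥ (W *ᵥ y + b) := by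
  rw [← mulVec_mulVec, inv_mulVec_mulVec_of_isUnit hC, mulVec_add, mulVec_mulVec]

end Affine

/-- The activated layer `x ↦ σ_p (W x + b)`, the building block of `fwdHidden` and `seg`. -/
def layer (σ : ℝ → ℝ) {p q : ℕ} (W : Matrix (Fin p) (Fin q) ℝ) (b : Fin p → ℝ)
    (x : Fin q → ℝ) : Fin p → ℝ :=
  actCoord σ p (W *ᵥ x + b)

theorem layer_mul_mul_inv_mulVec {σ : ℝ → ℝ} {p q : ℕ} {A : Matrix (Fin p) (Fin p) ℝ}
    (hσ : IsUnit ((1 : Matrix (Fin p) (Fin p) ℝ).map σ)) (hA : A ∈ Intertwiner σ p)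
    {C : Matrix (Fin q) (Fin q) ℝ} (hC : IsUnit C)
    (W : Matrix (Fin p) (Fin q) ℝ) (b : Fin p → ℝ) (y : Fin q → ℝ) :
    layer σ (A * W * C⁻¹) (A *ᵥ b) (C *ᵥ y) = phiMap σ p A *ᵥ layer σ W b y := by
  rw [layer, mul_mul_inv_mulVec_mulVec_add hC, actCoord_mulVec_eq_phiMap_mulVec hσ hA, layer]

theorem layer_mul {σ : ℝ → ℝ} {p q : ℕ} {A : Matrix (Fin p) (Fin p) ℝ}
    (hσ : IsUnit ((1 : Matrix (Fin p) (Fin p) ℝ).map σ)) (hA : A ∈ Intertwiner σ p)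
    (W : Matrix (Fin p) (Fin q) ℝ) (b : Fin p → ℝ) (x : Fin q → ℝ) :
    layer σ (A * W) (A *ᵥ b) x = phiMap σ p A *ᵥ layer σ W b x := by
  simpa using layer_mul_mul_inv_mulVec hσ hA isUnit_one W b x

section Network

variable {σ : ℝ → ℝ} {n : ℕ → ℕ} {W : ∀ i : ℕ, Matrix (Fin (n (i + 1))) (Fin (n i)) ℝ}
  {b : ∀ i : ℕ, Fin (n (i + 1)) → ℝ}

theorem fwdHidden_succ (m : ℕ) (x : Fin (n 0) → ℝ) :
    fwdHidden σ n W b (m + 1) x = layer σ (W m) (b m) (fwdHidden σ n W b m x) :=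
  rfl

theorem seg_succ (m j : ℕ) (y : Fin (n m) → ℝ) :
    seg σ n W b m (j + 1) y = layer σ (W (m + j)) (b (m + j)) (seg σ n W b m j y) :=
  rfl

theorem seg_fwdHidden (m j : ℕ) (x : Fin (n 0) → ℝ) :
    seg σ n W b m j (fwdHidden σ n W b m x) = fwdHidden σ n W b (m + j) x := by
  induction j with
  | zero => rfl
  | succ j ih => exact congrArg (layer σ (W (m + j)) (b (m + j))) ih

theorem seg_semiconj {σ' : ℝ → ℝ} {n' : ℕ → ℕ}
    {W' : ∀ i : ℕ, Matrix (Fin (n' (i + 1))) (Fin (n' i)) ℝ}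
    {b' : ∀ i : ℕ, Fin (n' (i + 1)) → ℝ}
    {g : ∀ i : ℕ, (Fin (n i) → ℝ) → (Fin (n' i) → ℝ)} {m j : ℕ}
    (h : ∀ i, m ≤ i → i < m + j → ∀ y,
      layer σ' (W' i) (b' i) (g i y) = g (i + 1) (layer σ (W i) (b i) y))
    (y : Fin (n m) → ℝ) :
    seg σ' n' W' b' m j (g m y) = g (m + j) (seg σ n W b m j y) := by
  induction j with
  | zero => rfl
  | succ j ih =>
    rw [seg_succ, ih fun i hmi hij => h i hmi (by lia)]
    exact h (m + j) (by lia) (by lia) _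

end Network

/-- Stitching with intertwiner groups.  With depth `k = m + r + 1`, stitching layer index
`l = m` (so `1 ≤ l ≤ k - 1`), original weights `(W, b)`, and transformed weights `(W', b')`
obtained from `A_i ∈ G_{σ_{n_i}}` as in the weight-space symmetry, the stitched networks
`f̃_{>l} ∘ φ_σ(A_l) ∘ f_{≤l}` and `f_{>l} ∘ φ_σ(A_l)⁻¹ ∘ f̃_{≤l}` both equal `f`,
where `f(x) = W_{k}·f_{≤ k-1}(x) + b_{k}` is the original network. -/
theorem intertwiner_stitching (σ : ℝ → ℝ) (n : ℕ → ℕ) (hn : ∀ i, 0 < n i)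
    (m r : ℕ) (hm : 1 ≤ m)
    (hσI : ∀ i : ℕ, 1 ≤ i → i ≤ m + r →
      IsUnit ((1 : Matrix (Fin (n i)) (Fin (n i)) ℝ).map σ))
    (W : ∀ i : ℕ, Matrix (Fin (n (i + 1))) (Fin (n i)) ℝ)
    (b : ∀ i : ℕ, Fin (n (i + 1)) → ℝ)
    (A : ∀ i : ℕ, Matrix (Fin (n i)) (Fin (n i)) ℝ)
    (hA : ∀ i : ℕ, 1 ≤ i → i ≤ m + r → A i ∈ Intertwiner σ (n i))
    (hAtop : A (m + r + 1) = 1)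
    (W' : ∀ i : ℕ, Matrix (Fin (n (i + 1))) (Fin (n i)) ℝ)
    (b' : ∀ i : ℕ, Fin (n (i + 1)) → ℝ)
    (hW'0 : W' 0 = A 1 * W 0)
    (hW' : ∀ i : ℕ, 1 ≤ i → i ≤ m + r →
      W' i = A (i + 1) * W i * (phiMap σ (n i) (A i))⁻¹)
    (hb' : ∀ i : ℕ, i ≤ m + r → b' i = (A (i + 1)).mulVec (b i)) :
    (∀ x : Fin (n 0) → ℝ,
      (W' (m + r)).mulVec
          (seg σ n W' b' m r
            ((phiMap σ (n m) (A m)).mulVec (fwdHidden σ n W b m x))) + b' (m + r) =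
        (W (m + r)).mulVec (fwdHidden σ n W b (m + r) x) + b (m + r)) ∧
    (∀ x : Fin (n 0) → ℝ,
      (W (m + r)).mulVec
          (seg σ n W b m r
            ((phiMap σ (n m) (A m))⁻¹.mulVec (fwdHidden σ n W' b' m x))) + b (m + r) =
        (W (m + r)).mulVec (fwdHidden σ n W b (m + r) x) + b (m + r)) := by
  let P (i : ℕ) : Matrix (Fin (n i)) (Fin (n i)) ℝ := phiMap σ (n i) (A i)
  have hP (i : ℕ) (h₁ : 1 ≤ i) (hi : i ≤ m + r) : IsUnit (P i) :=
    isUnit_phiMap (hσI i h₁ hi) (hA i h₁ hi)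
  have h_layer (i : ℕ) (h₁ : 1 ≤ i) (hi : i < m + r) (y : Fin (n i) → ℝ) :
      layer σ (W' i) (b' i) (P i *ᵥ y) = P (i + 1) *ᵥ layer σ (W i) (b i) y := by
    rw [hW' i h₁ hi.le, hb' i hi.le]
    exact layer_mul_mul_inv_mulVec (hσI _ (by lia) hi) (hA _ (by lia) hi) (hP i h₁ hi.le) ..
  have h_seg (l j : ℕ) (hl : 1 ≤ l) (hlj : l + j ≤ m + r) (y : Fin (n l) → ℝ) :
      seg σ n W' b' l j (P l *ᵥ y) = P (l + j) *ᵥ seg σ n W b l j y :=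
    seg_semiconj (g := fun i => (P i *ᵥ ·))
      (fun i hli hi => h_layer i (hl.trans hli) (hi.trans_le hlj)) y
  have h_first (x : Fin (n 0) → ℝ) : fwdHidden σ n W' b' 1 x = P 1 *ᵥ fwdHidden σ n W b 1 x := by
    rw [fwdHidden_succ, hW'0, hb' 0 (by lia)]
    exact layer_mul (hσI 1 le_rfl (by lia)) (hA 1 le_rfl (by lia)) ..
  have h_fwd (x : Fin (n 0) → ℝ) : fwdHidden σ n W' b' m x = P m *ᵥ fwdHidden σ n W b m x := by
    obtain ⟨j, rfl⟩ := Nat.exists_eq_add_of_le hm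
    rw [← seg_fwdHidden, h_first, h_seg 1 j le_rfl (by lia), seg_fwdHidden]
  refine ⟨fun x => ?_, fun x => ?_⟩
  · rw [h_seg m r hm le_rfl, hW' (m + r) (by lia) le_rfl, hb' (m + r) le_rfl,
      mul_mul_inv_mulVec_mulVec_add (hP (m + r) (by lia) le_rfl), hAtop, one_mulVec, seg_fwdHidden]
  · rw [h_fwd, inv_mulVec_mulVec_of_isUnit (hP m hm (by lia)), seg_fwdHidden]
end
end
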